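/- Let T be a tree on n ≥ 5 vertices with odd diameter. Then the eccentricity matrix 𝓔(T) has exactly five distinct eigenvalues. -/

import Mathlib

open SimpleGraph Finset Matrix Polynomial

/-- The eccentricity of a vertex: the greatest distance from `u` to any vertex. -/
noncomputable def ecc {V : Type*} [Fintype V] (G : SimpleGraph V) (u : V) : ℕ :=
  Finset.univ.sup fun v => G.dist u v

/-- The diameter of a graph: the greatest distance between any pair of vertices. -/
noncomputable def gdiam {V : Type*} [Fintype V] (G : SimpleGraph V) : ℕ :=
  Finset.univ.sup fun p : V × V => G.dist p.1 p.2

/-- The eccentricity matrix: `(u,v)` entry is `d(u,v)` if `d(u,v) = min (e u) (e v)`,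
and `0` otherwise. -/
noncomputable def eccMatrix {V : Type*} [Fintype V] (G : SimpleGraph V) : Matrix V V ℝ :=
  Matrix.of fun u v =>
    if G.dist u v = min (ecc G u) (ecc G v) then (G.dist u v : ℝ) else 0

/-!
Let `D` be the diameter and `c`, `e` the ends of the middle edge of a diametral path. Vertices on
the same side of this edge are too close together to contribute to the eccentricity matrix. For
vertices on different sides the entry is nonzero exactly when one of them is *peripheral*, that is,
has eccentricity `D`, and it then equals the smaller eccentricity, which is `ecc u * ecc v / D`
because the larger one is `D`. Hence the matrix is `diag ecc * B * diag ecc / D` with `B` a blow-up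
of the path on the four classes

  inner on the side of `c` — peripheral on the side of `e`
    — peripheral on the side of `c` — inner on the side of `e`.

So its characteristic polynomial is `X ^ (n - 4)` times that of a positively weighted path on four
vertices, `X ^ 4 - (w₀ w₁ + w₁ w₂ + w₂ w₃) X ^ 2 + w₀ w₁ w₂ w₃`, which has four distinct nonzero
real roots.
-/

section Polynomial

theorem card_roots_toFinset_X_pow_mul {R : Type*} [CommRing R] [IsDomain R] [DecidableEq R]
    {P : R[X]} (hP : P.coeff 0 ≠ 0) {k : ℕ} (hk : k ≠ 0) :
    (X ^ k * P).roots.toFinset.card = P.roots.toFinset.card + 1 := by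
  have hP0 : P ≠ 0 := by rintro rfl; simp at hP
  have h0 : (0 : R) ∉ P.roots.toFinset := by
    simpa [hP0, coeff_zero_eq_eval_zero] using hP
  have hroots : (X ^ k * P).roots.toFinset = insert 0 P.roots.toFinset := by
    rw [roots_mul (mul_ne_zero (pow_ne_zero k X_ne_zero) hP0), Multiset.toFinset_add, roots_X_pow,
      Multiset.toFinset_nsmul _ _ hk, Multiset.toFinset_singleton, insert_eq]
  rw [hroots, card_insert_of_notMem h0]

theorem card_roots_toFinset_biquadratic {s c : ℝ} (hs : 0 < s) (hc : 0 < c)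
    (hdisc : 4 * c < s ^ 2) : (X ^ 4 - C s * X ^ 2 + C c).roots.toFinset.card = 4 := by
  set r := √(s ^ 2 - 4 * c)
  have hr : 0 < r := Real.sqrt_pos.mpr (by linarith)
  have hr_sq : r ^ 2 = s ^ 2 - 4 * c := Real.sq_sqrt (by linarith)
  have hrs : r < s := by nlinarith
  set m := √((s - r) / 2)
  set M := √((s + r) / 2)
  have hm : 0 < m := Real.sqrt_pos.mpr (by linarith)
  have hmM : m < M := Real.sqrt_lt_sqrt (by linarith) (by linarith)
  have hm_sq : m ^ 2 = (s - r) / 2 := Real.sq_sqrt (by linarith)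
  have hM_sq : M ^ 2 = (s + r) / 2 := Real.sq_sqrt (by linarith)
  have hsum : s = m ^ 2 + M ^ 2 := by rw [hm_sq, hM_sq]; ring
  have hprod : c = m ^ 2 * M ^ 2 := by rw [hm_sq, hM_sq]; linear_combination hr_sq / 4
  let Z : Multiset ℝ := {m, -m, M, -M}
  have hZ : Z.Nodup := by
    simp only [Z, Multiset.insert_eq_cons, Multiset.nodup_cons, Multiset.mem_cons,
      Multiset.mem_singleton, Multiset.nodup_singleton, not_or, and_true]
    refine ⟨⟨?_, ?_, ?_⟩, ⟨?_, ?_⟩, ?_⟩ <;> intro <;> linarith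
  have hfactor : X ^ 4 - C s * X ^ 2 + C c = (Z.map fun a => X - C a).prod := by
    simp only [Z, hsum, hprod, Multiset.insert_eq_cons, Multiset.map_cons, Multiset.map_singleton,
      Multiset.prod_cons, Multiset.prod_singleton, map_add, map_mul, map_pow, map_neg]
    ring
  rw [hfactor, roots_multiset_prod_X_sub_C, Multiset.toFinset_card_of_nodup hZ]
  rfl

end Polynomial

section Matrix

variable {R : Type*} [CommRing R]

theorem charpoly_diagonal_mul_submatrix_mul_diagonal {V m : Type*} [Fintype V] [DecidableEq V]
    [Fintype m] [DecidableEq m] (K : Matrix m m R) (κ : V → m) (f g : V → R)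
    (hcard : Fintype.card m ≤ Fintype.card V) :
    (diagonal f * K.submatrix κ κ * diagonal g).charpoly =
      X ^ (Fintype.card V - Fintype.card m) *
        (K * diagonal fun k => ∑ u with κ u = k, g u * f u).charpoly := by
  let S : Matrix V m R := of fun u k => if κ u = k then 1 else 0
  have hblowup : K.submatrix κ κ = S * K * Sᵀ := by
    ext u v
    simp [S, mul_apply]
  have hgram : Sᵀ * diagonal g * (diagonal f * S) =
      diagonal fun k => ∑ u with κ u = k, g u * f u := by
    ext k l
    rw [mul_apply, diagonal_apply, sum_filter]
    simp only [S, mul_diagonal, diagonal_mul, transpose_apply, of_apply]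
    split_ifs with hkl
    · exact sum_congr rfl fun u _ => by rw [hkl]; split_ifs <;> simp
    · exact sum_eq_zero fun u _ => by split_ifs <;> simp_all
  calc (diagonal f * K.submatrix κ κ * diagonal g).charpoly
      = (diagonal f * S * (K * (Sᵀ * diagonal g))).charpoly := by
        simp only [hblowup, Matrix.mul_assoc]
    _ = _ := by rw [charpoly_mul_comm_of_le _ _ hcard, Matrix.mul_assoc, hgram]

theorem charpoly_adjMatrix_pathGraph_four_mul_diagonal [DecidableRel (pathGraph 4).Adj]
    (w : Fin 4 → R) :
    ((pathGraph 4).adjMatrix R * diagonal w).charpoly =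
      X ^ 4 - C (w 0 * w 1 + w 1 * w 2 + w 2 * w 3) * X ^ 2 + C (w 0 * w 1 * w 2 * w 3) := by
  have hcharmatrix : charmatrix ((pathGraph 4).adjMatrix R * diagonal w) =
      !![X, -C (w 1), 0, 0; -C (w 0), X, -C (w 2), 0; 0, -C (w 1), X, -C (w 3);
        0, 0, -C (w 2), X] := by
    ext1 i j
    fin_cases i <;> fin_cases j <;> simp [adjMatrix_apply, pathGraph_adj]
  rw [charpoly, hcharmatrix, det_succ_row_zero]
  simp only [of_apply, submatrix_apply, Fin.succAbove, Matrix.cons_val, Fin.reduceSucc,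
    Fin.coe_ofNat_eq_mod, ↓reduceIte, Fin.reduceCastSucc, Fin.reduceLT, Fin.sum_univ_four,
    map_add, map_mul, det_fin_three]
  ring

theorem card_roots_X_pow_mul_charpoly_weighted_pathGraph_four [DecidableRel (pathGraph 4).Adj]
    {w : Fin 4 → ℝ} (hw : ∀ k, 0 < w k) {k : ℕ} (hk : k ≠ 0) :
    (X ^ k * ((pathGraph 4).adjMatrix ℝ * diagonal w).charpoly).roots.toFinset.card = 5 := by
  have h0 := hw 0
  have h1 := hw 1
  have h2 := hw 2
  have h3 := hw 3
  have hdisc : 4 * (w 0 * w 1 * w 2 * w 3) < (w 0 * w 1 + w 1 * w 2 + w 2 * w 3) ^ 2 := by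
    have : 0 < (w 1 * w 2) ^ 2 + 2 * (w 1 * w 2) * (w 0 * w 1 + w 2 * w 3) := by positivity
    linarith [sq_nonneg (w 0 * w 1 - w 2 * w 3)]
  rw [charpoly_adjMatrix_pathGraph_four_mul_diagonal,
    card_roots_toFinset_X_pow_mul (by simp [h0.ne', h1.ne', h2.ne', h3.ne']) hk,
    card_roots_toFinset_biquadratic (by positivity) (by positivity) hdisc]

end Matrix

section Distance

variable {V : Type*} {G : SimpleGraph V} {c e u v : V}

theorem dist_add_dist_of_mem_support {x : V} {p : G.Walk u v} (hp : p.length = G.dist u v)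
    (hx : x ∈ p.support) : G.dist u x + G.dist x v = G.dist u v := by
  classical
  have htake := length_eq_dist_of_subwalk hp (p.isSubwalk_takeUntil hx)
  have hdrop := length_eq_dist_of_subwalk hp (p.isSubwalk_dropUntil hx)
  rw [← htake, ← hdrop, ← hp, ← Walk.length_append, Walk.take_spec]

theorem reachable_deleteEdges_of_dist_le (hG : G.Connected) (hce : c ≠ e)
    (hu : G.dist u c ≤ G.dist u e) : (G.deleteEdges {s(c, e)}).Reachable u c := by
  obtain ⟨p, hp⟩ := hG.exists_walk_length_eq_dist u c
  suffices hedge : s(c, e) ∉ p.edges from ⟨p.toDeleteEdge _ hedge⟩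
  intro hedge
  have hsplit := dist_add_dist_of_mem_support hp (p.snd_mem_support_of_mem_edges hedge)
  have hpos := hG.pos_dist_of_ne hce.symm
  omega

theorem dist_eq_succ_or_of_isBridge (hG : G.Connected) (hb : G.IsBridge s(c, e)) (u : V) :
    G.dist u e = G.dist u c + 1 ∨ G.dist u c = G.dist u e + 1 := by
  have hce : G.Adj c e := hb.reachable_iff_adj.mp (hG c e)
  have hne : G.dist u c ≠ G.dist u e := by
    intro heq
    have huc := reachable_deleteEdges_of_dist_le hG hce.ne heq.le
    have hue := reachable_deleteEdges_of_dist_le hG hce.ne' heq.ge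
    rw [Sym2.eq_swap] at hue
    exact hb (huc.symm.trans hue)
  have := hce.diff_dist_adj (u := u)
  omega

theorem dist_eq_of_isBridge (hG : G.Connected) (hb : G.IsBridge s(c, e))
    (hu : G.dist u c < G.dist u e) (hv : G.dist v e < G.dist v c) :
    G.dist u v = G.dist u c + G.dist v e + 1 := by
  have hce : G.Adj c e := hb.reachable_iff_adj.mp (hG c e)
  have huc := reachable_deleteEdges_of_dist_le hG hce.ne hu.le
  have hve := reachable_deleteEdges_of_dist_le hG hce.ne' hv.le
  rw [Sym2.eq_swap] at hve
  obtain ⟨p, hp⟩ := hG.exists_walk_length_eq_dist u v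
  have hedge : s(c, e) ∈ p.edges := by
    by_contra hedge
    exact hb (huc.symm.trans (⟨p.toDeleteEdge _ hedge⟩ : Reachable _ u v) |>.trans hve)
  have hsplit := dist_add_dist_of_mem_support hp (p.fst_mem_support_of_mem_edges hedge)
  have hvc := dist_eq_succ_or_of_isBridge hG hb v
  rw [G.dist_comm (u := c)] at hsplit
  omega

end Distance

section CentralBridge

variable {V : Type*} [Fintype V] {G : SimpleGraph V} {c e u v : V} {d : ℕ}

theorem dist_le_gdiam (G : SimpleGraph V) (u v : V) : G.dist u v ≤ gdiam G :=
  le_sup (f := fun p : V × V => G.dist p.1 p.2) (mem_univ (u, v))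

theorem eccMatrix_comm (G : SimpleGraph V) (u v : V) : eccMatrix G u v = eccMatrix G v u := by
  simp only [eccMatrix, of_apply, G.dist_comm (u := u), min_comm (ecc G u)]

/-- The edge `ce` is a bridge and the middle edge of a diametral path, which has length `2 * d + 1`.
In a tree of odd diameter such an edge exists, and it is all the spectral argument needs. -/
structure IsCentralBridge (G : SimpleGraph V) (c e : V) (d : ℕ) : Prop where
  isBridge : G.IsBridge s(c, e)
  gdiam_eq : gdiam G = 2 * d + 1
  exists_diametral : ∃ x y, G.dist x c = d ∧ G.dist y e = d ∧ G.dist x y = 2 * d + 1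

theorem exists_isCentralBridge_of_isTree (hG : G.IsTree) (hodd : Odd (gdiam G)) :
    ∃ c e d, IsCentralBridge G c e d := by
  have := hG.connected.nonempty
  obtain ⟨d, hd⟩ := hodd
  obtain ⟨⟨x, y⟩, -, hxy⟩ := exists_mem_eq_sup (univ : Finset (V × V)) univ_nonempty
    fun p => G.dist p.1 p.2
  replace hxy : G.dist x y = 2 * d + 1 := hxy.symm.trans hd
  obtain ⟨p, hp⟩ := hG.connected.exists_walk_length_eq_dist x y
  have hadj : G.Adj (p.getVert d) (p.getVert (d + 1)) := p.adj_getVert_succ (by omega)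
  have hx : G.dist x (p.getVert d) = d := by
    rw [← length_eq_dist_of_subwalk hp (p.isSubwalk_take d), Walk.take_length]
    omega
  have hy : G.dist y (p.getVert (d + 1)) = d := by
    rw [G.dist_comm, ← length_eq_dist_of_subwalk hp (p.isSubwalk_drop (d + 1)), Walk.drop_length]
    omega
  exact ⟨_, _, d, isAcyclic_iff_forall_adj_isBridge.mp hG.isAcyclic hadj, hd, x, y, hx, hy, hxy⟩

/-- The class of `u` in the blow-up of the path on four vertices that underlies the eccentricity
matrix, for a central bridge `ce` with `d` as in `IsCentralBridge`. On the side of `c` the vertices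
at distance `d` from `c` have class `2` and the others class `0`; on the side of `e` the vertices at
distance `d` from `e` have class `1` and the others class `3`. -/
noncomputable def pathClass (G : SimpleGraph V) (c e : V) (d : ℕ) (u : V) : Fin 4 :=
  if G.dist u c < G.dist u e then if G.dist u c = d then 2 else 0
  else if G.dist u e = d then 1 else 3

namespace IsCentralBridge

theorem symm (h : IsCentralBridge G c e d) : IsCentralBridge G e c d := by
  obtain ⟨x, y, hx, hy, hxy⟩ := h.exists_diametral
  exact ⟨Sym2.eq_swap ▸ h.isBridge, h.gdiam_eq, y, x, hy, hx, G.dist_comm.trans hxy⟩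

theorem dist_lt_or_dist_lt (hG : G.Connected) (h : IsCentralBridge G c e d) (u : V) :
    G.dist u c < G.dist u e ∨ G.dist u e < G.dist u c := by
  have := dist_eq_succ_or_of_isBridge hG h.isBridge u
  omega

theorem exists_dist_eq (hG : G.Connected) (h : IsCentralBridge G c e d) :
    ∃ x, G.dist x c = d ∧ G.dist x c < G.dist x e := by
  obtain ⟨x, y, hx, hy, hxy⟩ := h.exists_diametral
  have htri := hG.dist_triangle (u := x) (v := e) (w := y)
  rw [G.dist_comm (u := e)] at htri
  exact ⟨x, hx, by omega⟩

theorem dist_le (hG : G.Connected) (h : IsCentralBridge G c e d)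
    (hu : G.dist u c < G.dist u e) : G.dist u c ≤ d := by
  obtain ⟨y, hy, hye⟩ := h.symm.exists_dist_eq hG
  have huy := dist_eq_of_isBridge hG h.isBridge hu hye
  have hdiam := dist_le_gdiam G u y
  have := h.gdiam_eq
  omega

theorem ecc_eq (hG : G.Connected) (h : IsCentralBridge G c e d)
    (hu : G.dist u c < G.dist u e) : ecc G u = G.dist u c + d + 1 := by
  apply le_antisymm
  · refine Finset.sup_le fun v _ => ?_
    rcases h.dist_lt_or_dist_lt hG v with hv | hv
    · have htri := hG.dist_triangle (u := u) (v := c) (w := v)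
      have hvc := h.dist_le hG hv
      rw [G.dist_comm (u := c)] at htri
      omega
    · have huv := dist_eq_of_isBridge hG h.isBridge hu hv
      have hve := h.symm.dist_le hG hv
      omega
  · obtain ⟨y, hy, hye⟩ := h.symm.exists_dist_eq hG
    calc G.dist u c + d + 1 = G.dist u y := by
          rw [dist_eq_of_isBridge hG h.isBridge hu hye, hy]
      _ ≤ ecc G u := le_sup (f := fun v => G.dist u v) (mem_univ y)

theorem ecc_pos (hG : G.Connected) (h : IsCentralBridge G c e d) (u : V) : 0 < ecc G u := by
  rcases h.dist_lt_or_dist_lt hG u with hu | hu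
  · rw [h.ecc_eq hG hu]
    omega
  · rw [h.symm.ecc_eq hG hu]
    omega

theorem pos_of_two_lt_card (hG : G.Connected) (h : IsCentralBridge G c e d)
    (hcard : 2 < Fintype.card V) : 0 < d := by
  classical
  by_contra hd
  have hsub : (univ : Finset V) ⊆ {c, e} := by
    intro u _
    have : u = c ∨ u = e := by
      rw [← hG.dist_eq_zero_iff, ← hG.dist_eq_zero_iff]
      refine (h.dist_lt_or_dist_lt hG u).imp (fun hu => ?_) fun hu => ?_
      · have := h.dist_le hG hu
        omega
      · have := h.symm.dist_le hG hu
        omega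
    simpa only [mem_insert, mem_singleton] using this
  have hle := (card_le_card hsub).trans card_le_two
  rw [card_univ] at hle
  omega

theorem eccMatrix_eq_zero (hG : G.Connected) (h : IsCentralBridge G c e d)
    (hu : G.dist u c < G.dist u e) (hv : G.dist v c < G.dist v e) : eccMatrix G u v = 0 := by
  have htri := hG.dist_triangle (u := u) (v := c) (w := v)
  rw [G.dist_comm (u := c)] at htri
  have huc := h.dist_le hG hu
  have hvc := h.dist_le hG hv
  refine if_neg ?_
  rw [h.ecc_eq hG hu, h.ecc_eq hG hv]
  omega

theorem eccMatrix_eq_ite (hG : G.Connected) (h : IsCentralBridge G c e d)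
    (hu : G.dist u c < G.dist u e) (hv : G.dist v e < G.dist v c) :
    eccMatrix G u v =
      if G.dist u c = d ∨ G.dist v e = d then (ecc G u : ℝ) * (ecc G v / (2 * d + 1)) else 0 := by
  have huc := h.dist_le hG hu
  have hve := h.symm.dist_le hG hv
  have hdist := dist_eq_of_isBridge hG h.isBridge hu hv
  have hcond : G.dist u v = min (ecc G u) (ecc G v) ↔ G.dist u c = d ∨ G.dist v e = d := by
    rw [hdist, h.ecc_eq hG hu, h.symm.ecc_eq hG hv]
    omega
  simp only [eccMatrix, of_apply, hcond]
  refine ite_congr rfl (fun hd => ?_) fun _ => rfl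
  rw [hdist, h.ecc_eq hG hu, h.symm.ecc_eq hG hv]
  push_cast
  rcases hd with hd | hd <;> rw [hd] <;> field_simp <;> ring

theorem eccMatrix_eq [DecidableEq V] [DecidableRel (pathGraph 4).Adj] (hG : G.Connected)
    (h : IsCentralBridge G c e d) :
    eccMatrix G = diagonal (fun u => (ecc G u : ℝ)) *
      ((pathGraph 4).adjMatrix ℝ).submatrix (pathClass G c e d) (pathClass G c e d) *
      diagonal fun u => (ecc G u : ℝ) / (2 * d + 1) := by
  ext u v
  rw [mul_diagonal, diagonal_mul, submatrix_apply, adjMatrix_apply]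
  rcases h.dist_lt_or_dist_lt hG u with hu | hu <;> rcases h.dist_lt_or_dist_lt hG v with hv | hv
  · rw [h.eccMatrix_eq_zero hG hu hv]
    simp only [pathClass, hu, hv, if_true]
    split_ifs <;> simp_all [pathGraph_adj]
  · rw [h.eccMatrix_eq_ite hG hu hv]
    simp only [pathClass, hu, hv.not_gt, if_true, if_false]
    split_ifs <;> simp_all [pathGraph_adj]
  · rw [eccMatrix_comm, h.eccMatrix_eq_ite hG hv hu, mul_div_left_comm]
    simp only [pathClass, hv, hu.not_gt, if_true, if_false]
    split_ifs <;> simp_all [pathGraph_adj]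
  · rw [h.symm.eccMatrix_eq_zero hG hu hv]
    simp only [pathClass, hu.not_gt, hv.not_gt, if_false]
    split_ifs <;> simp_all [pathGraph_adj]

theorem pathClass_surjective (hG : G.Connected) (h : IsCentralBridge G c e d) (hd : 0 < d) :
    Function.Surjective (pathClass G c e d) := by
  have hce : c ≠ e := (h.isBridge.reachable_iff_adj.mp (hG c e)).ne
  obtain ⟨x, hxc, hx⟩ := h.exists_dist_eq hG
  obtain ⟨y, hye, hy⟩ := h.symm.exists_dist_eq hG
  intro k
  fin_cases k
  · exact ⟨c, by simp [pathClass, hG.pos_dist_of_ne hce, hd.ne]⟩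
  · exact ⟨y, by rw [pathClass, if_neg hy.not_gt, if_pos hye]; rfl⟩
  · exact ⟨x, by rw [pathClass, if_pos hx, if_pos hxc]; rfl⟩
  · exact ⟨e, by simp [pathClass, hd.ne]⟩

end IsCentralBridge

end CentralBridge

theorem stmt6_general {V : Type*} [Fintype V] [DecidableEq V] {G : SimpleGraph V}
    {c e : V} {d : ℕ} (hG : G.Connected) (h : IsCentralBridge G c e d)
    (h5 : 5 ≤ Fintype.card V) : (eccMatrix G).charpoly.roots.toFinset.card = 5 := by
  classical
  have hsurj := h.pathClass_surjective hG (h.pos_of_two_lt_card hG (by omega))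
  rw [h.eccMatrix_eq hG, charpoly_diagonal_mul_submatrix_mul_diagonal _ _ _ _
    (Fintype.card_le_of_surjective _ hsurj)]
  refine card_roots_X_pow_mul_charpoly_weighted_pathGraph_four (fun k => ?_)
    (by rw [Fintype.card_fin]; omega)
  obtain ⟨u, hu⟩ := hsurj k
  refine sum_pos (fun v _ => ?_) ⟨u, mem_filter.mpr ⟨mem_univ u, hu⟩⟩
  have := h.ecc_pos hG v
  positivity

/-- A tree on `n ≥ 5` vertices with odd diameter has exactly five distinct eigenvalues of its
eccentricity matrix. -/
theorem stmt6 {V : Type*} [Fintype V] [DecidableEq V] (T : SimpleGraph V) (n : ℕ)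
    (hT : T.IsTree) (hn : Fintype.card V = n) (h5 : 5 ≤ n) (hodd : Odd (gdiam T)) :
    (eccMatrix T).charpoly.roots.toFinset.card = 5 := by
  obtain ⟨c, e, d, h⟩ := exists_isCentralBridge_of_isTree hT hodd
  exact stmt6_general hT.connected h (hn ▸ h5)
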